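/- arXiv:1304.6059 — 2 statements merged into one kernel-verified Lean document; each statement's English description precedes it below -/
import Mathlib

section
/- Let C be a triangulated category, B a weakly negative set of objects of C, and 𝔻 the triangulated subcategory of C generated by B. Let X be an object of C with Hom(X, Z) = 0 for all Z ∈ B_{≥1}, and Y an object of C with Hom(Z, Y) = 0 for all Z ∈ B_{≤ −1}. Then the map C(X, Y) → (C/𝔻)(X, Y) induced by the Verdier localization functor is surjective. -/
open CategoryTheory Limits Pretriangulated ZeroObject

universe v u v' u'

section TriangulatedPrelude

variable {C : Type u} [Category.{v} C] [HasZeroObject C] [HasShift C ℤ] [Preadditive C]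
  [∀ n : ℤ, (shiftFunctor C n).Additive] [Pretriangulated C]

/-- The objects of the smallest strict full triangulated subcategory of `C`
containing the set of objects `B`. -/
inductive genSub (B : Set C) : C → Prop
  | of (X : C) (hX : X ∈ B) : genSub B X
  | zero (X : C) (hX : IsZero X) : genSub B X
  | shift (X : C) (n : ℤ) (hX : genSub B X) : genSub B (X⟦n⟧)
  | ext₂ (T : Triangle C) (hT : T ∈ distTriang C) (h₁ : genSub B T.obj₁)
      (h₃ : genSub B T.obj₃) : genSub B T.obj₂

/-- The triangulated subcategory of `C` generated by `B`. -/
def genSubcat (B : Set C) : ObjectProperty C :=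
  genSub B

instance (B : Set C) : (genSubcat B).IsTriangulated where
  exists_zero := ⟨0, isZero_zero C, genSub.zero _ (isZero_zero _)⟩
  isStableUnderShiftBy n := ⟨fun X h => genSub.shift X n h⟩
  ext₂' T hT h₁ h₃ := ObjectProperty.le_isoClosure _ _ (genSub.ext₂ T hT h₁ h₃)

/-- The extension-closure of a class of objects `E`: the smallest class containing `E`
and `0` and such that for any distinguished triangle `X ⟶ Y ⟶ Z` with `X, Z` in the
class, `Y` is also in the class. -/
inductive extClosure (E : Set C) : C → Prop
  | of (X : C) (hX : X ∈ E) : extClosure E X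
  | zero (X : C) (hX : IsZero X) : extClosure E X
  | ext₂ (T : Triangle C) (hT : T ∈ distTriang C) (h₁ : extClosure E T.obj₁)
      (h₃ : extClosure E T.obj₃) : extClosure E T.obj₂

/-- `D_{[i,j]}`: the extension-closure of `∪_{i ≤ l ≤ j} D[l]`. -/
def shiftClosure (D : Set C) (i j : ℤ) : Set C :=
  extClosure {X | ∃ (Y : C) (l : ℤ), i ≤ l ∧ l ≤ j ∧ Y ∈ D ∧ X = Y⟦l⟧}

/-- `D_{≥ i} = ∪_{k ≥ i} D_{[i,k]}`. -/
def shiftClosureGE (D : Set C) (i : ℤ) : Set C := {X | ∃ k, i ≤ k ∧ X ∈ shiftClosure D i k}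

/-- `D_{≤ j} = ∪_{k ≤ j} D_{[k,j]}`. -/
def shiftClosureLE (D : Set C) (j : ℤ) : Set C := {X | ∃ k, k ≤ j ∧ X ∈ shiftClosure D k j}

/-- A set of objects `D` is weakly negative if `0 ∈ D` and `Hom(X, Y[i]) = 0`
for all `X, Y ∈ D` and all `i ≥ 2`. -/
def WeaklyNegative (D : Set C) : Prop :=
  (0 : C) ∈ D ∧ ∀ X ∈ D, ∀ Y ∈ D, ∀ i : ℤ, 2 ≤ i → ∀ f : X ⟶ (Y⟦i⟧), f = 0

end TriangulatedPrelude

/-!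
Weak negativity makes every extension of an object of `B_{≤ i}` by an object of `B_{≥ i+1}` split.
Hence `B_{≤ i} * B_{≥ i+1}` is closed under extensions, so it contains the whole triangulated
subcategory generated by `B`.

A morphism `X ⟶ Y` in the quotient is a roof `X ⟵ X' ⟶ Y`, where the cone `Z` of `X' ⟶ X` sits in a
distinguished triangle `A ⟶ Z ⟶ A'` with `A ∈ B_{≤ 0}` and `A' ∈ B_{≥ 1}`. As `Hom(X, A') = 0`, the
roof can be refined so that this cone becomes `A`; as `Hom(A[-1], Y) = 0`, the refined roof comes
from an actual morphism `X ⟶ Y`.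
-/

section Shift

variable {C : Type u} [Category.{v} C] [HasShift C ℤ] [HasZeroMorphisms C]

lemma shift_hom_eq_zero {X Y : C} {a b : ℤ} (hab : a + b = 0)
    (h : ∀ g : X ⟶ Y⟦b⟧, g = 0) (f : X⟦a⟧ ⟶ Y) : f = 0 :=
  ((shiftEquiv' C a b hab).toAdjunction.homEquiv X Y).injective ((h _).trans (h _).symm)

end Shift

section WeaklyNegativeShift

variable {C : Type u} [Category.{v} C] [HasZeroObject C] [HasShift C ℤ] [Preadditive C]

lemma WeaklyNegative.shift_hom_shift_eq_zero {D : Set C} (hD : WeaklyNegative D) {X Y : C}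
    (hX : X ∈ D) (hY : Y ∈ D) {l m : ℤ} (hlm : l + 2 ≤ m) (f : X⟦l⟧ ⟶ Y⟦m⟧) : f = 0 := by
  refine shift_hom_eq_zero (add_neg_cancel l) (fun g ↦ ?_) f
  let e : Y⟦m - l⟧ ≅ Y⟦m⟧⟦-l⟧ := (shiftFunctorAdd' C m (-l) (m - l) (by lia)).app Y
  rw [← cancel_mono e.inv, zero_comp]
  exact hD.2 X hX Y hY (m - l) (by lia) _

end WeaklyNegativeShift

section Pretriangulated

variable {C : Type u} [Category.{v} C] [HasZeroObject C] [HasShift C ℤ] [Preadditive C]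
  [∀ n : ℤ, (shiftFunctor C n).Additive] [Pretriangulated C]

section ExtensionProduct

variable {P Q : ObjectProperty C}

lemma isClosedUnderIsomorphisms_of_ext₂ (zero : ∀ X, IsZero X → P X)
    (ext₂ : ∀ T ∈ distTriang C, P T.obj₁ → P T.obj₃ → P T.obj₂) :
    P.IsClosedUnderIsomorphisms where
  of_iso {X X'} e hX := by
    have hT : Triangle.mk e.hom (0 : X' ⟶ 0) 0 ∈ distTriang C :=
      (Triangle.distinguished_iff_of_isZero₃ _ (isZero_zero C)).2 (inferInstanceAs (IsIso e.hom))
    exact ext₂ _ hT hX (zero _ (isZero_zero C))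

lemma extensionProduct_swap_le
    (h : ∀ ⦃X Y : C⦄, P X → Q Y → ∀ f : X ⟶ Y⟦(1 : ℤ)⟧, f = 0) :
    Q.extensionProduct P ≤ P.extensionProduct Q := by
  rintro E ⟨Y, X, f, g, δ, hT, hY, hX⟩
  obtain ⟨e, -, -⟩ := exists_iso_binaryBiproduct_of_distTriang _ hT (h hX hY δ)
  exact ObjectProperty.prop_of_iso _ (biprod.braiding X Y ≪≫ e.symm)
    ⟨_, _, _, _, _, binaryBiproductTriangle_distinguished X Y, hX, hY⟩

lemma isTriangulatedClosed₂_extensionProduct [IsTriangulated C]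
    [P.IsTriangulatedClosed₂] [Q.IsTriangulatedClosed₂]
    (h : ∀ ⦃X Y : C⦄, P X → Q Y → ∀ f : X ⟶ Y⟦(1 : ℤ)⟧, f = 0) :
    (P.extensionProduct Q).IsTriangulatedClosed₂ := by
  have key : (P.extensionProduct Q).extensionProduct (P.extensionProduct Q) ≤
      P.extensionProduct Q := calc
    _ = P.extensionProduct ((Q.extensionProduct P).extensionProduct Q) := by
      simp only [ObjectProperty.extensionProduct_assoc]
    _ ≤ P.extensionProduct ((P.extensionProduct Q).extensionProduct Q) :=
      ObjectProperty.monotone_extensionProduct_right _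
        (ObjectProperty.monotone_extensionProduct_left _ (extensionProduct_swap_le h))
    _ = (P.extensionProduct P).extensionProduct (Q.extensionProduct Q) := by
      simp only [ObjectProperty.extensionProduct_assoc]
    _ ≤ P.isoClosure.extensionProduct Q.isoClosure :=
      (ObjectProperty.monotone_extensionProduct_left _
        (ObjectProperty.extensionProduct_le_of_isTriangulatedClosed₂' le_rfl le_rfl)).trans
      (ObjectProperty.monotone_extensionProduct_right _
        (ObjectProperty.extensionProduct_le_of_isTriangulatedClosed₂' le_rfl le_rfl))
    _ = P.extensionProduct Q := by
      rw [ObjectProperty.extensionProduct_isoClosure_left,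
        ObjectProperty.extensionProduct_isoClosure_right]
  exact .mk' fun T hT h₁ h₃ ↦ key _ ⟨_, _, _, _, _, hT, h₁, h₃⟩

end ExtensionProduct

section VerdierQuotient

variable {P P₁ P₂ : ObjectProperty C} {X Y : C}

lemma exists_comp_mem_trW_of_leftOrthogonal {X' : C} {s : X' ⟶ X}
    (hs : (P₁.extensionProduct P₂).trW s) (hX : P₂.leftOrthogonal X) :
    ∃ (X'' : C) (r : X'' ⟶ X'), P₁.trW (r ≫ s) := by
  obtain ⟨Z, g, δ, hs, A, A', a, b, c, hZ, hA, hA'⟩ := hs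
  obtain ⟨q, hq⟩ : ∃ q : X ⟶ A, g = q ≫ a := Triangle.coyoneda_exact₂ _ hZ g (hX _ hA')
  obtain ⟨X'', t, w, ht⟩ := distinguished_cocone_triangle₁ q
  have htg : t ≫ g = 0 := by
    rw [hq, ← Category.assoc, show t ≫ q = 0 from comp_distTriang_mor_zero₁₂ _ ht, zero_comp]
  obtain ⟨r, hr⟩ : ∃ r : X'' ⟶ X', t = r ≫ s := Triangle.coyoneda_exact₂ _ hs t htg
  exact ⟨X'', r, hr ▸ ObjectProperty.trW.mk P₁ ht hA⟩

lemma exists_eq_comp_of_trW {X' : C} {t : X' ⟶ X} (ht : P.trW t)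
    (hY : ∀ ⦃A : C⦄, P A → ∀ f : A⟦(-1 : ℤ)⟧ ⟶ Y, f = 0) (k : X' ⟶ Y) :
    ∃ f : X ⟶ Y, k = t ≫ f := by
  obtain ⟨A, q, w, hT, hA⟩ := ht
  exact Triangle.yoneda_exact₂ _ (inv_rot_of_distTriang _ hT) k (hY hA _)

lemma map_surjective_of_le_extensionProduct [IsTriangulated C] [P.IsTriangulated]
    {E : Type u'} [Category.{v'} E] (L : C ⥤ E) [L.IsLocalization P.trW]
    (hP : P ≤ P₁.extensionProduct P₂) (hP₁ : P₁ ≤ P) (hX : P₂.leftOrthogonal X)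
    (hY : ∀ ⦃A : C⦄, P₁ A → ∀ f : A⟦(-1 : ℤ)⟧ ⟶ Y, f = 0) :
    Function.Surjective (L.map : (X ⟶ Y) → (L.obj X ⟶ L.obj Y)) := by
  intro e
  obtain ⟨φ, rfl⟩ := Localization.exists_rightFraction L P.trW e
  obtain ⟨X'', r, ht⟩ :=
    exists_comp_mem_trW_of_leftOrthogonal (ObjectProperty.trW_monotone hP _ φ.hs) hX
  obtain ⟨f, hf⟩ := exists_eq_comp_of_trW ht hY (r ≫ φ.f)
  have : IsIso (L.map (r ≫ φ.s)) :=
    Localization.inverts L P.trW _ (ObjectProperty.trW_monotone hP₁ _ ht)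
  refine ⟨f, ?_⟩
  rw [← cancel_epi (L.map (r ≫ φ.s)), ← L.map_comp, ← hf]
  simp only [Functor.map_comp, Category.assoc, MorphismProperty.RightFraction.map_s_comp_map]

end VerdierQuotient

section Closures

variable {D E F : Set C} {P Q : ObjectProperty C} {i j : ℤ}

instance : (genSubcat D).IsClosedUnderIsomorphisms :=
  isClosedUnderIsomorphisms_of_ext₂ genSub.zero genSub.ext₂

lemma genSubcat_le_of_forall_shift [P.IsClosedUnderIsomorphisms] [P.ContainsZero]
    [P.IsTriangulatedClosed₂] (hP : ∀ X ∈ D, ∀ n : ℤ, P (X⟦n⟧)) : genSubcat D ≤ P := by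
  have shift_mem {X : C} (hX : genSub D X) (n : ℤ) : P (X⟦n⟧) := by
    induction hX generalizing n with
    | of X hX => exact hP X hX n
    | zero X hX => exact P.prop_of_isZero (Functor.map_isZero _ hX)
    | shift X m _ ih => exact P.prop_of_iso ((shiftFunctorAdd C m n).app X) (ih (m + n))
    | ext₂ T hT _ _ h₁ h₃ =>
      exact P.ext_of_isTriangulatedClosed₂ _ (Triangle.shift_distinguished _ hT n) (h₁ n) (h₃ n)
  exact fun X hX ↦ P.prop_of_iso ((shiftFunctorZero C ℤ).app X) (shift_mem hX 0)

lemma genSubcat_le_extensionProduct_of_forall_shift [IsTriangulated C] [P.ContainsZero]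
    [P.IsTriangulatedClosed₂] [Q.ContainsZero] [Q.IsTriangulatedClosed₂]
    (hPQ : ∀ ⦃X Y : C⦄, P X → Q Y → ∀ f : X ⟶ Y⟦(1 : ℤ)⟧, f = 0)
    (hD : ∀ X ∈ D, ∀ n : ℤ, P (X⟦n⟧) ∨ Q (X⟦n⟧)) : genSubcat D ≤ P.extensionProduct Q := by
  have := isTriangulatedClosed₂_extensionProduct hPQ
  have : (P.extensionProduct Q).ContainsZero := by
    obtain ⟨Z, hZ, hPZ⟩ := P.exists_prop_of_containsZero
    exact ⟨Z, hZ, ObjectProperty.le_extensionProduct_left Q Z hPZ⟩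
  exact genSubcat_le_of_forall_shift fun X hX n ↦ (hD X hX n).elim
    (ObjectProperty.le_extensionProduct_left Q _) (ObjectProperty.le_extensionProduct_right P _)

instance : ObjectProperty.IsClosedUnderIsomorphisms (extClosure E) :=
  isClosedUnderIsomorphisms_of_ext₂ extClosure.zero extClosure.ext₂

lemma extClosure_le [P.IsClosedUnderIsomorphisms] [P.ContainsZero] [P.IsTriangulatedClosed₂]
    (hE : ∀ X ∈ E, P X) : extClosure E ≤ P := by
  intro X hX
  induction hX with
  | of X hX => exact hE X hX
  | zero X hX => exact P.prop_of_isZero hX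
  | ext₂ T hT _ _ h₁ h₃ => exact P.ext_of_isTriangulatedClosed₂ T hT h₁ h₃

lemma extClosure_le_leftOrthogonal_extClosure
    (h : ∀ X ∈ E, ∀ Y ∈ F, ∀ f : X ⟶ Y, f = 0) :
    extClosure E ≤ ObjectProperty.leftOrthogonal (extClosure F) := by
  refine extClosure_le fun X hX Y f hY ↦ ?_
  have hF : extClosure F ≤ ObjectProperty.rightOrthogonal (· ∈ E) :=
    extClosure_le fun Y hY X f hX ↦ h X hX Y hY f
  exact hF Y hY f hX

lemma shift_mem_shiftClosure_of_mem {X : C} (hX : X ∈ D) {l : ℤ} (hil : i ≤ l) (hlj : l ≤ j) :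
    X⟦l⟧ ∈ shiftClosure D i j :=
  extClosure.of _ ⟨X, l, hil, hlj, hX, rfl⟩

lemma shiftClosure_subset_shiftClosure {i' j' : ℤ} (hi : i' ≤ i) (hj : j ≤ j') :
    shiftClosure D i j ⊆ shiftClosure D i' j' := by
  intro X hX
  induction hX with
  | of X hX =>
    obtain ⟨Y, l, hil, hlj, hY, rfl⟩ := hX
    exact shift_mem_shiftClosure_of_mem hY (hi.trans hil) (hlj.trans hj)
  | zero X hX => exact extClosure.zero X hX
  | ext₂ T hT _ _ h₁ h₃ => exact extClosure.ext₂ T hT h₁ h₃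

lemma shift_mem_shiftClosure {X : C} (hX : X ∈ shiftClosure D i j) (n : ℤ) :
    X⟦n⟧ ∈ shiftClosure D (i + n) (j + n) := by
  induction hX with
  | of X hX =>
    obtain ⟨Y, l, hil, hlj, hY, rfl⟩ := hX
    exact ObjectProperty.prop_of_iso (extClosure _) ((shiftFunctorAdd C l n).app Y)
      (shift_mem_shiftClosure_of_mem hY (by lia) (by lia))
  | zero X hX => exact extClosure.zero _ (Functor.map_isZero _ hX)
  | ext₂ T hT _ _ h₁ h₃ => exact extClosure.ext₂ _ (Triangle.shift_distinguished T hT n) h₁ h₃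

lemma shift_mem_shiftClosureGE {X : C} (hX : X ∈ shiftClosureGE D i) {n i' : ℤ}
    (hi' : i + n = i') : X⟦n⟧ ∈ shiftClosureGE D i' := by
  subst hi'
  obtain ⟨k, hik, hX⟩ := hX
  exact ⟨k + n, by lia, shift_mem_shiftClosure hX n⟩

lemma shift_mem_shiftClosureLE {X : C} (hX : X ∈ shiftClosureLE D j) {n j' : ℤ}
    (hj' : j + n = j') : X⟦n⟧ ∈ shiftClosureLE D j' := by
  subst hj'
  obtain ⟨k, hkj, hX⟩ := hX
  exact ⟨k + n, by lia, shift_mem_shiftClosure hX n⟩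

instance : ObjectProperty.ContainsZero (shiftClosureGE D i) where
  exists_zero := ⟨0, isZero_zero C, i, le_rfl, extClosure.zero _ (isZero_zero C)⟩

instance : ObjectProperty.ContainsZero (shiftClosureLE D j) where
  exists_zero := ⟨0, isZero_zero C, j, le_rfl, extClosure.zero _ (isZero_zero C)⟩

instance : ObjectProperty.IsTriangulatedClosed₂ (shiftClosureGE D i) where
  ext₂' T hT := by
    rintro ⟨k, hik, h₁⟩ ⟨m, -, h₃⟩
    exact ObjectProperty.le_isoClosure _ _ ⟨max k m, hik.trans (le_max_left k m),
      extClosure.ext₂ T hT (shiftClosure_subset_shiftClosure le_rfl (le_max_left k m) h₁)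
        (shiftClosure_subset_shiftClosure le_rfl (le_max_right k m) h₃)⟩

instance : ObjectProperty.IsTriangulatedClosed₂ (shiftClosureLE D j) where
  ext₂' T hT := by
    rintro ⟨k, hkj, h₁⟩ ⟨m, -, h₃⟩
    exact ObjectProperty.le_isoClosure _ _ ⟨min k m, (min_le_left k m).trans hkj,
      extClosure.ext₂ T hT (shiftClosure_subset_shiftClosure (min_le_left k m) le_rfl h₁)
        (shiftClosure_subset_shiftClosure (min_le_right k m) le_rfl h₃)⟩

lemma genSubcat_of_mem_shiftClosureLE {X : C} (hX : X ∈ shiftClosureLE D j) :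
    genSubcat D X := by
  obtain ⟨k, -, hX⟩ := hX
  refine extClosure_le (P := genSubcat D) ?_ X hX
  rintro _ ⟨Y, l, -, -, hY, rfl⟩
  exact genSub.shift Y l (genSub.of Y hY)

namespace WeaklyNegative

lemma shiftClosureLE_hom_shiftClosureGE_eq_zero (hD : WeaklyNegative D) (hij : i + 2 ≤ j)
    {X Y : C} (hX : X ∈ shiftClosureLE D i) (hY : Y ∈ shiftClosureGE D j) (f : X ⟶ Y) :
    f = 0 := by
  obtain ⟨k, -, hX⟩ := hX
  obtain ⟨m, -, hY⟩ := hY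
  refine extClosure_le_leftOrthogonal_extClosure ?_ X hX f hY
  rintro _ ⟨X₀, l, -, hl, hX₀, rfl⟩ _ ⟨Y₀, n, hn, -, hY₀, rfl⟩
  exact hD.shift_hom_shift_eq_zero hX₀ hY₀ (by lia)

lemma genSubcat_le_extensionProduct [IsTriangulated C] (hD : WeaklyNegative D) (i : ℤ) :
    genSubcat D ≤
      ObjectProperty.extensionProduct (shiftClosureLE D i) (shiftClosureGE D (i + 1)) := by
  refine genSubcat_le_extensionProduct_of_forall_shift
    (fun X Y hX hY f ↦ hD.shiftClosureLE_hom_shiftClosureGE_eq_zero (by lia) hX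
      (shift_mem_shiftClosureGE hY rfl) f)
    fun X hX n ↦ ?_
  rcases le_or_gt n i with hn | hn
  · exact .inl ⟨n, hn, shift_mem_shiftClosure_of_mem hX le_rfl hn⟩
  · exact .inr ⟨n, hn, shift_mem_shiftClosure_of_mem hX hn le_rfl⟩

end WeaklyNegative

end Closures

end Pretriangulated

/-- Proposition: under the given orthogonality assumptions, the localization functor
induces a surjection `C(X, Y) → (C/𝔻)(X, Y)`. -/
theorem statement7 {C : Type u} [Category.{v} C] [HasZeroObject C] [HasShift C ℤ]
    [Preadditive C] [∀ n : ℤ, (shiftFunctor C n).Additive] [Pretriangulated C]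
    [IsTriangulated C] (B : Set C) (hB : WeaklyNegative B) (X Y : C)
    (hX : ∀ Z ∈ shiftClosureGE B 1, ∀ f : X ⟶ Z, f = 0)
    (hY : ∀ Z ∈ shiftClosureLE B (-1), ∀ f : Z ⟶ Y, f = 0) :
    ∀ e : (genSubcat B).trW.Q.obj X ⟶ (genSubcat B).trW.Q.obj Y,
      ∃ f : X ⟶ Y, (genSubcat B).trW.Q.map f = e := by
  have hX' : ObjectProperty.leftOrthogonal (shiftClosureGE B 1) X := fun Z f hZ ↦ hX Z hZ f
  have hY' : ∀ Z ∈ shiftClosureLE B 0, ∀ f : Z⟦(-1 : ℤ)⟧ ⟶ Y, f = 0 := fun Z hZ ↦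
    hY _ (shift_mem_shiftClosureLE hZ (zero_add (-1)))
  exact map_surjective_of_le_extensionProduct (genSubcat B).trW.Q
    (hB.genSubcat_le_extensionProduct 0) (fun _ ↦ genSubcat_of_mem_shiftClosureLE) hX' hY'
end

section
/- Let C be a triangulated category with a weight structure w, let B be a set of objects of C_{[0,1]}, and let 𝔻 be the triangulated subcategory of C generated by B. Then the classes of objects of the Verdier quotient C/𝔻 given by all retracts (in C/𝔻) of objects of C_{w≤0}, respectively all retracts of objects of C_{w≥0}, form a weight structure on C/𝔻; in particular, the localization functor C → C/𝔻 is weight-exact (it sends C_{w≤0} into (C/𝔻)_{w≤0} and C_{w≥0} into (C/𝔻)_{w≥0}). -/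
/-!
The only point that is not formal is orthogonality in `C/𝔻`. A morphism from `X ∈ C_{w≤0}` to
`Y ∈ C_{w≥1}` in `C/𝔻` is a fraction `X ⟶ Z ⟵ Y` in which the cone `D` of `s : Y ⟶ Z` lies in `𝔻`.
Suppose that `D` is an extension of an object of `𝔻 ∩ C_{w≥1}` by an object `A` of `𝔻 ∩ C_{w≤1}`.
The composite `X ⟶ Z ⟶ D` then lifts to `A`, because `X` has no nonzero maps to `C_{w≥1}`, and
`A ⟶ D` lifts to `Z`, because `A` has no nonzero maps to `Y[1] ∈ C_{w≥2}`. The morphism `X ⟶ Z`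
differs from the resulting `X ⟶ A ⟶ Z` by a morphism factoring through `Y`, hence by zero, and so
it vanishes in `C/𝔻`.

The objects which, for each `n`, are extensions of an object of `𝔻 ∩ C_{w≥n}` by an object of
`𝔻 ∩ C_{w≤n}` form a triangulated subcategory: since there are no nonzero maps from `C_{w≤n}` to
`C_{w≥n}[1]`, the pieces of an iterated extension can be reordered. An object of `C_{[0,1]}` lies
in `C_{w≤n}` or in `C_{w≥n}` for each `n`, so all of `𝔻` is of this kind.
-/

open CategoryTheory Limits Pretriangulated ZeroObject

universe v u v' u'

section TriangulatedPrelude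

variable {C : Type u} [Category.{v} C] [HasZeroObject C] [HasShift C ℤ] [Preadditive C]
  [∀ n : ℤ, (shiftFunctor C n).Additive] [Pretriangulated C]

instance genSubcat_isTriangulated (B : Set C) : (genSubcat B).IsTriangulated where
  exists_zero := ⟨0, isZero_zero _, genSub.zero _ (isZero_zero _)⟩
  isStableUnderShiftBy n := ⟨fun X h => genSub.shift X n h⟩
  ext₂' := fun T hT h₁ h₃ =>
    ObjectProperty.le_isoClosure _ _ (genSub.ext₂ T hT h₁ h₃)

end TriangulatedPrelude

section WeightStructurePrelude

variable (C : Type u) [Category.{v} C] [HasZeroObject C] [HasShift C ℤ] [Preadditive C]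
  [∀ n : ℤ, (shiftFunctor C n).Additive] [Pretriangulated C]

/-- A weight structure on a (pre)triangulated category `C` (homological convention):
two retract-closed classes of objects `LE = C_{w≤0}` and `GE = C_{w≥0}` such that
`C_{w≤0} ⊆ C_{w≤0}[1]`, `C_{w≥0}[1] ⊆ C_{w≥0}`, `Hom(C_{w≤0}, C_{w≥0}[1]) = 0`, and every
object `M` admits a weight decomposition `X ⟶ M ⟶ Y ⟶ X[1]` with `X ∈ C_{w≤0}`,
`Y ∈ C_{w≥0}[1]`. -/
structure WeightStructure where
  /-- the class `C_{w≤0}` -/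
  LE : Set C
  /-- the class `C_{w≥0}` -/
  GE : Set C
  retract_LE : ∀ ⦃X Y : C⦄, Y ∈ LE → ∀ (i : X ⟶ Y) (r : Y ⟶ X), i ≫ r = 𝟙 X → X ∈ LE
  retract_GE : ∀ ⦃X Y : C⦄, Y ∈ GE → ∀ (i : X ⟶ Y) (r : Y ⟶ X), i ≫ r = 𝟙 X → X ∈ GE
  shift_LE : ∀ X ∈ LE, X⟦(-1 : ℤ)⟧ ∈ LE
  shift_GE : ∀ X ∈ GE, X⟦(1 : ℤ)⟧ ∈ GE
  orthogonality : ∀ X ∈ LE, ∀ Y ∈ GE, ∀ f : X ⟶ (Y⟦(1 : ℤ)⟧), f = 0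
  decomposition : ∀ M : C, ∃ (X Y : C) (a : X ⟶ M) (b : M ⟶ Y) (c : Y ⟶ X⟦(1 : ℤ)⟧),
    (Triangle.mk a b c ∈ distTriang C) ∧ X ∈ LE ∧ Y⟦(-1 : ℤ)⟧ ∈ GE

variable {C}

/-- The class `C_{w=0} = C_{w≤0} ∩ C_{w≥0}` of objects of the heart. -/
def WeightStructure.heart (w : WeightStructure C) : Set C := w.LE ∩ w.GE

/-- The class `C_{[0,1]} = C_{w≥0} ∩ C_{w≤1}`. -/
def WeightStructure.zeroOne (w : WeightStructure C) : Set C :=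
  {X | X ∈ w.GE ∧ X⟦(-1 : ℤ)⟧ ∈ w.LE}

end WeightStructurePrelude

open ObjectProperty

section Pretriangulated

variable {C : Type u} [Category.{v} C] [HasZeroObject C] [HasShift C ℤ] [Preadditive C]
  [∀ n : ℤ, (shiftFunctor C n).Additive] [Pretriangulated C]

theorem genSubcat_le {B : Set C} {P : ObjectProperty C} [P.IsTriangulated]
    [P.IsClosedUnderIsomorphisms] (hB : ∀ X ∈ B, P X) : genSubcat B ≤ P := by
  intro X hX
  induction hX with
  | of X hX => exact hB X hX
  | zero X hX => exact P.prop_of_isZero hX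
  | shift X n _ ih => exact P.le_shift n X ih
  | ext₂ T hT _ _ h₁ h₃ => exact P.ext_of_isTriangulatedClosed₂ T hT h₁ h₃

theorem extensionProduct_le_swap {P Q : ObjectProperty C}
    (h : ∀ ⦃X Y : C⦄, P X → Q Y → ∀ f : X ⟶ Y⟦(1 : ℤ)⟧, f = 0) :
    extensionProduct Q P ≤ extensionProduct P Q := by
  rintro E ⟨Y, X, f, g, δ, hT, hY, hX⟩
  obtain ⟨e, _⟩ := exists_iso_binaryBiproduct_of_distTriang _ hT (h hX hY δ)
  exact prop_of_iso _ (prod.braiding X Y ≪≫ (biprod.isoProd Y X).symm ≪≫ e.symm)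
    ⟨X, Y, _, _, _, binaryProductTriangle_distinguished X Y, hX, hY⟩

theorem isTriangulatedClosed₂_extensionProduct_s17 [IsTriangulated C] {P Q : ObjectProperty C}
    [P.IsTriangulatedClosed₂] [Q.IsTriangulatedClosed₂]
    (hswap : extensionProduct Q P ≤ extensionProduct P Q) :
    (extensionProduct P Q).IsTriangulatedClosed₂ := by
  have hP : extensionProduct P P ≤ P.isoClosure :=
    extensionProduct_le_of_isTriangulatedClosed₂' le_rfl le_rfl
  have hQ : extensionProduct Q Q ≤ Q.isoClosure :=
    extensionProduct_le_of_isTriangulatedClosed₂' le_rfl le_rfl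
  have hclosed : extensionProduct (extensionProduct P Q) (extensionProduct P Q) ≤
      extensionProduct P Q :=
    calc extensionProduct (extensionProduct P Q) (extensionProduct P Q)
      _ = extensionProduct P (extensionProduct (extensionProduct Q P) Q) := by
        simp only [extensionProduct_assoc]
      _ ≤ extensionProduct P (extensionProduct (extensionProduct P Q) Q) :=
        monotone_extensionProduct_right _ (monotone_extensionProduct_left _ hswap)
      _ = extensionProduct (extensionProduct P P) (extensionProduct Q Q) := by
        simp only [extensionProduct_assoc]
      _ ≤ extensionProduct P.isoClosure Q.isoClosure :=
        (monotone_extensionProduct_left _ hP).trans (monotone_extensionProduct_right _ hQ)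
      _ = extensionProduct P Q := by
        rw [extensionProduct_isoClosure_left, extensionProduct_isoClosure_right]
  exact .mk' fun T hT h₁ h₃ ↦ hclosed _ ⟨_, _, _, _, _, hT, h₁, h₃⟩

variable {D : Type u'} [Category.{v'} D] [HasZeroObject D] [HasShift D ℤ] [Preadditive D]
  [∀ n : ℤ, (shiftFunctor D n).Additive] [Pretriangulated D]

theorem map_extensionProduct_le (F : C ⥤ D) [F.CommShift ℤ] [F.IsTriangulated]
    (P Q : ObjectProperty C) :
    (extensionProduct P Q).map F ≤ extensionProduct (P.map F) (Q.map F) := by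
  rintro _ ⟨X, ⟨A, B, f, g, δ, hT, hA, hB⟩, ⟨e⟩⟩
  exact prop_of_iso _ e ⟨F.obj A, F.obj B, _, _, _, F.map_distinguished _ hT,
    P.prop_map_obj F hA, Q.prop_map_obj F hB⟩

end Pretriangulated

namespace WeightStructure

variable {C : Type u} [Category.{v} C] [HasZeroObject C] [HasShift C ℤ] [Preadditive C]
  [∀ n : ℤ, (shiftFunctor C n).Additive] [Pretriangulated C] (w : WeightStructure C)

/-- The class `C_{w≤n} = C_{w≤0}[n]`, as a property of objects. It is encoded by
`X[-n] ∈ C_{w≤0}`, so that it is closed under isomorphisms. -/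
def le (n : ℤ) : ObjectProperty C := ObjectProperty.shift w.LE (-n)

/-- The class `C_{w≥n} = C_{w≥0}[n]`, as a property of objects. It is encoded by
`X[-n] ∈ C_{w≥0}`, so that it is closed under isomorphisms. -/
def ge (n : ℤ) : ObjectProperty C := ObjectProperty.shift w.GE (-n)

instance : IsClosedUnderIsomorphisms (C := C) w.LE where
  of_iso e hX := w.retract_LE hX e.inv e.hom e.inv_hom_id

instance : IsClosedUnderIsomorphisms (C := C) w.GE where
  of_iso e hX := w.retract_GE hX e.inv e.hom e.inv_hom_id

instance : IsStableUnderShiftBy (C := C) w.LE (-1 : ℤ) where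
  le_shift := w.shift_LE

instance : IsStableUnderShiftBy (C := C) w.GE (1 : ℤ) where
  le_shift := w.shift_GE

instance (n : ℤ) : (w.le n).IsStableUnderRetracts where
  of_retract h hY :=
    have h' := h.map (shiftFunctor C (-n))
    w.retract_LE hY h'.i h'.r h'.retract

instance (n : ℤ) : (w.ge n).IsStableUnderRetracts where
  of_retract h hY :=
    have h' := h.map (shiftFunctor C (-n))
    w.retract_GE hY h'.i h'.r h'.retract

theorem le_zero : w.le 0 = w.LE := ObjectProperty.shift_zero (A := ℤ) w.LE

theorem ge_zero : w.ge 0 = w.GE := ObjectProperty.shift_zero (A := ℤ) w.GE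

theorem le_shift {a m n : ℤ} (h : m + a = n) : (w.le n).shift a = w.le m :=
  shift_shift w.LE a (-n) (-m) (by lia)

theorem ge_shift {a m n : ℤ} (h : m + a = n) : (w.ge n).shift a = w.ge m :=
  shift_shift w.GE a (-n) (-m) (by lia)

theorem prop_le_shift {a m n : ℤ} (h : m + a = n) {X : C} (hX : w.le m X) : w.le n (X⟦a⟧) := by
  rwa [← w.le_shift h] at hX

theorem prop_ge_shift {a m n : ℤ} (h : m + a = n) {X : C} (hX : w.ge m X) : w.ge n (X⟦a⟧) := by
  rwa [← w.ge_shift h] at hX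

theorem le_monotone : Monotone w.le := by
  refine monotone_int_of_le_succ fun n ↦ ?_
  calc w.le n
    _ ≤ (ObjectProperty.shift w.LE (-1 : ℤ)).shift (-n) :=
      fun X hX ↦ ObjectProperty.le_shift w.LE (-1 : ℤ) _ hX
    _ = w.le (n + 1) := shift_shift w.LE (-n) (-1) (-(n + 1)) (by lia)

theorem ge_antitone : Antitone w.ge := by
  refine antitone_int_of_succ_le fun n ↦ ?_
  calc w.ge (n + 1)
    _ ≤ (ObjectProperty.shift w.GE (1 : ℤ)).shift (-(n + 1)) :=
      fun X hX ↦ ObjectProperty.le_shift w.GE (1 : ℤ) _ hX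
    _ = w.ge n := shift_shift w.GE (-(n + 1)) 1 (-n) (by lia)

theorem hom_eq_zero {m n : ℤ} (h : m < n) {X Y : C} (hX : w.le m X) (hY : w.ge n Y)
    (f : X ⟶ Y) : f = 0 := by
  have hY' : Y⟦-(m + 1)⟧ ∈ w.GE := w.ge_antitone (show m + 1 ≤ n by lia) Y hY
  let e : Y⟦-m⟧ ≅ Y⟦-(m + 1)⟧⟦(1 : ℤ)⟧ := (shiftFunctorAdd' C (-(m + 1)) 1 (-m) (by lia)).app Y
  have hf : f⟦-m⟧' ≫ e.hom = 0 := w.orthogonality _ hX _ hY' _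
  have hf' : f⟦-m⟧' = 0 := (cancel_mono e.hom).1 (hf.trans zero_comp.symm)
  exact (shiftFunctor C (-m)).map_injective (hf'.trans (Functor.map_zero _ _ _).symm)

theorem extensionProduct_le_ge {m n : ℤ} (h : m + 1 = n) :
    extensionProduct (w.le m) (w.ge n) = ⊤ := by
  refine eq_top_iff.2 fun M _ ↦ ?_
  obtain ⟨X, Y, f, g, δ, hT, hX, hY⟩ := w.decomposition (M⟦-m⟧)
  have hX' : w.le 0 X := by rwa [le_zero]
  have hM : extensionProduct (w.le m) (w.ge n) (M⟦-m⟧⟦m⟧) :=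
    ⟨X⟦m⟧, Y⟦m⟧, _, _, _, Triangle.shift_distinguished _ hT m,
      w.prop_le_shift (zero_add m) hX', w.prop_ge_shift (m := 1) (by lia) hY⟩
  exact prop_of_iso _ (shiftNegShift M m) hM

theorem leftOrthogonal_ge {m n : ℤ} (h : m + 1 = n) : (w.ge n).leftOrthogonal = w.le m := by
  refine le_antisymm (fun X hX ↦ ?_) fun X hX Y f hY ↦ w.hom_eq_zero (by lia) hX hY f
  obtain ⟨A, A', f, g, δ, hT, hA, hA'⟩ :=
    (w.extensionProduct_le_ge h).ge X trivial
  obtain ⟨i, hi⟩ := Triangle.coyoneda_exact₂ _ hT (𝟙 X) ((Category.id_comp g).trans (hX g hA'))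
  exact prop_of_retract _ ⟨i, f, hi.symm⟩ hA

theorem rightOrthogonal_le {m n : ℤ} (h : m + 1 = n) : (w.le m).rightOrthogonal = w.ge n := by
  refine le_antisymm (fun Y hY ↦ ?_) fun Y hY X f hX ↦ w.hom_eq_zero (by lia) hX hY f
  obtain ⟨A, A', f, g, δ, hT, hA, hA'⟩ :=
    (w.extensionProduct_le_ge h).ge Y trivial
  obtain ⟨r, hr⟩ := Triangle.yoneda_exact₂ _ hT (𝟙 Y) ((Category.comp_id f).trans (hY f hA))
  exact prop_of_retract _ ⟨g, r, hr.symm⟩ hA'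

instance (n : ℤ) : (w.le n).IsTriangulatedClosed₂ := by
  rw [← w.leftOrthogonal_ge (n := n + 1) rfl]
  infer_instance

instance (n : ℤ) : (w.ge n).IsTriangulatedClosed₂ := by
  rw [← w.rightOrthogonal_le (m := n - 1) (by lia)]
  infer_instance

instance (n : ℤ) : (w.le n).ContainsZero := by
  rw [← w.leftOrthogonal_ge (n := n + 1) rfl]
  infer_instance

instance (n : ℤ) : (w.ge n).ContainsZero := by
  rw [← w.rightOrthogonal_le (m := n - 1) (by lia)]
  infer_instance

/-- The objects which, for every `n`, are extensions of an object of `P ∩ C_{w≥n}` by an object of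
`P ∩ C_{w≤n}`. When all objects of a triangulated subcategory `P` are of this kind, the weight
structure descends to the Verdier quotient by `P`. The two pieces overlap in weight `n`, so this
is weaker than having weight decompositions inside `P`. -/
def decomposableIn (P : ObjectProperty C) : ObjectProperty C :=
  fun X ↦ ∀ n : ℤ, extensionProduct (w.le n ⊓ P) (w.ge n ⊓ P) X

instance (P : ObjectProperty C) : (w.decomposableIn P).IsClosedUnderIsomorphisms where
  of_iso e hX n := prop_of_iso _ e (hX n)

theorem extensionProduct_swap_inf_le_ge (P : ObjectProperty C) (n : ℤ) :
    extensionProduct (w.ge n ⊓ P) (w.le n ⊓ P) ≤ extensionProduct (w.le n ⊓ P) (w.ge n ⊓ P) :=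
  extensionProduct_le_swap fun _ _ hX hY f ↦
    w.hom_eq_zero (lt_add_one n) hX.1 (w.prop_ge_shift rfl hY.1) f

instance [IsTriangulated C] (P : ObjectProperty C) [P.IsTriangulated] :
    (w.decomposableIn P).IsTriangulated where
  exists_zero := by
    obtain ⟨Z, hZ, hPZ⟩ := P.exists_prop_of_containsZero
    exact ⟨Z, hZ, fun n ↦ le_extensionProduct_left _ Z ⟨prop_of_isZero _ hZ, hPZ⟩⟩
  isStableUnderShiftBy a :=
    { le_shift := by
        intro X hX n
        obtain ⟨A, A', f, g, δ, hT, hA, hA'⟩ := hX (n - a)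
        exact ⟨A⟦a⟧, A'⟦a⟧, _, _, _, Triangle.shift_distinguished _ hT a,
          ⟨w.prop_le_shift (by lia) hA.1, P.le_shift a A hA.2⟩,
          ⟨w.prop_ge_shift (by lia) hA'.1, P.le_shift a A' hA'.2⟩⟩ }
  toIsTriangulatedClosed₂ := .mk' fun T hT h₁ h₃ n ↦
    have := isTriangulatedClosed₂_extensionProduct_s17 (w.extensionProduct_swap_inf_le_ge P n)
    ext_of_isTriangulatedClosed₂ _ T hT (h₁ n) (h₃ n)

theorem decomposableIn_of_forall_le_or_ge {P : ObjectProperty C} [P.ContainsZero] {X : C}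
    (hX : P X) (h : ∀ n, w.le n X ∨ w.ge n X) : w.decomposableIn P X := by
  intro n
  obtain hle | hge := h n
  · exact le_extensionProduct_left _ X ⟨hle, hX⟩
  · exact le_extensionProduct_right _ X ⟨hge, hX⟩

theorem le_or_ge_of_mem_zeroOne {X : C} (hX : X ∈ w.zeroOne) (n : ℤ) : w.le n X ∨ w.ge n X := by
  have hle : w.le 1 X := hX.2
  have hge : w.ge 0 X := by rw [ge_zero]; exact hX.1
  obtain hn | hn := lt_or_ge 0 n
  · exact .inl (w.le_monotone (show 1 ≤ n by lia) X hle)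
  · exact .inr (w.ge_antitone hn X hge)

theorem genSubcat_le_decomposableIn [IsTriangulated C] {B : Set C}
    (hB : ∀ X ∈ B, ∀ n, w.le n X ∨ w.ge n X) : genSubcat B ≤ w.decomposableIn (genSubcat B) :=
  genSubcat_le fun X hX ↦ w.decomposableIn_of_forall_le_or_ge (genSub.of X hX) (hB X hX)

end WeightStructure

section Functor

variable {C : Type u} [Category.{v} C] {D : Type u'} [Category.{v'} D]

theorem retractClosure_map_eq (F : C ⥤ D) (P : ObjectProperty C) :
    (P.map F).retractClosure =
      {X | ∃ Y, P Y ∧ ∃ (i : X ⟶ F.obj Y) (r : F.obj Y ⟶ X), i ≫ r = 𝟙 X} := by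
  ext X
  constructor
  · rintro ⟨_, ⟨Y, hY, ⟨e⟩⟩, ⟨h⟩⟩
    have h' := h.trans (.ofIso e.symm)
    exact ⟨Y, hY, h'.i, h'.r, h'.retract⟩
  · rintro ⟨Y, hY, i, r, hir⟩
    exact prop_retractClosure (P.prop_map_obj F hY) ⟨i, r, hir⟩

theorem retractClosure_map_le_shift {A : Type*} [AddMonoid A] [HasShift C A] [HasShift D A]
    (F : C ⥤ D) [F.CommShift A] {P Q : ObjectProperty C} {a : A} (h : P ≤ Q.shift a) :
    (P.map F).retractClosure ≤ (Q.map F).retractClosure.shift a := by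
  rintro X ⟨_, ⟨Y, hY, ⟨e⟩⟩, ⟨hX⟩⟩
  exact prop_retractClosure (Q.prop_map_obj F (h Y hY))
    ((hX.trans (.ofIso e.symm)).map (shiftFunctor D a) |>.trans
      (.ofIso ((F.commShiftIso a).symm.app Y)))

theorem map_le_leftOrthogonal_map [HasZeroMorphisms D] {F : C ⥤ D} {P Q : ObjectProperty C}
    (h : ∀ ⦃X Y : C⦄, P X → Q Y → ∀ f : F.obj X ⟶ F.obj Y, f = 0) :
    P.map F ≤ (Q.map F).leftOrthogonal := by
  rintro _ ⟨X, hX, ⟨e⟩⟩ _ f ⟨Y, hY, ⟨e'⟩⟩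
  have hf : e.hom ≫ f ≫ e'.inv = 0 := h hX hY _
  rw [← cancel_epi e.hom, ← cancel_mono e'.inv, Category.assoc, hf, comp_zero, zero_comp]

theorem retractClosure_le_leftOrthogonal_retractClosure [HasZeroMorphisms D]
    {P Q : ObjectProperty D} (h : P ≤ Q.leftOrthogonal) :
    P.retractClosure ≤ Q.retractClosure.leftOrthogonal := by
  rintro X ⟨X', hX', ⟨rX⟩⟩ Y f ⟨Y', hY', ⟨rY⟩⟩
  have hf : rX.r ≫ f ≫ rY.i = 0 := h X' hX' _ hY'
  calc f
    _ = rX.i ≫ (rX.r ≫ f ≫ rY.i) ≫ rY.r := by simp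
    _ = 0 := by rw [hf, zero_comp, comp_zero]

end Functor

section Localization

variable {C : Type u} [Category.{v} C] [HasZeroObject C] [HasShift C ℤ] [Preadditive C]
  [∀ n : ℤ, (shiftFunctor C n).Additive] [Pretriangulated C]
  {D : Type u'} [Category.{v'} D] [Preadditive D]

theorem le_kernel_of_isLocalization_trW (P : ObjectProperty C) (L : C ⥤ D)
    [L.PreservesZeroMorphisms] [L.IsLocalization P.trW] : P ≤ L.kernel := by
  intro X hX
  have h : P.trW (0 : 0 ⟶ X) := trW.mk P (contractible_distinguished₁ X) hX
  have := Localization.inverts L P.trW _ h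
  exact (L.map_isZero (isZero_zero C)).of_iso (asIso (L.map (0 : 0 ⟶ X))).symm

namespace WeightStructure

variable (w : WeightStructure C) {P : ObjectProperty C}

theorem exists_fac_of_trW (hP : P ≤ w.decomposableIn P) {n : ℤ} {X Y Z : C} (hX : w.le n X)
    (hY : w.ge (n + 1) Y) {s : Y ⟶ Z} (hs : P.trW s) (g : X ⟶ Z) :
    ∃ (A : C) (x : X ⟶ A) (l : A ⟶ Z), P A ∧ x ≫ l = g := by
  obtain ⟨E, p, δ, hT, hE⟩ := (P.trW_iff s).1 hs
  obtain ⟨A, A', a, b, _, hT', hA, hA'⟩ := hP E hE (n + 1)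
  obtain ⟨x, hx⟩ : ∃ x : X ⟶ A, g ≫ p = x ≫ a :=
    Triangle.coyoneda_exact₂ _ hT' (g ≫ p) (w.hom_eq_zero (lt_add_one n) hX hA'.1 _)
  obtain ⟨l, hl⟩ : ∃ l : A ⟶ Z, a = l ≫ p :=
    Triangle.coyoneda_exact₃ _ hT a
      (w.hom_eq_zero (lt_add_one (n + 1)) hA.1 (w.prop_ge_shift rfl hY) _)
  have hp : (g - x ≫ l) ≫ p = 0 := by
    rw [Preadditive.sub_comp, Category.assoc, ← hl, hx, sub_self]
  obtain ⟨y, hy⟩ : ∃ y : X ⟶ Y, g - x ≫ l = y ≫ s := Triangle.coyoneda_exact₂ _ hT _ hp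
  have hgxl : g - x ≫ l = 0 := by
    rw [hy, w.hom_eq_zero (lt_add_one n) hX hY y, zero_comp]
  exact ⟨A, x, l, hA.2, (sub_eq_zero.1 hgxl).symm⟩

variable [IsTriangulated C] [P.IsTriangulated] (L : C ⥤ D) [L.IsLocalization P.trW]

theorem map_hom_eq_zero [L.PreservesZeroMorphisms] (hP : P ≤ w.decomposableIn P) {n : ℤ}
    {X Y : C} (hX : w.le n X) (hY : w.ge (n + 1) Y) (f : L.obj X ⟶ L.obj Y) : f = 0 := by
  obtain ⟨φ, rfl⟩ := Localization.exists_leftFraction L P.trW f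
  obtain ⟨A, x, l, hA, hxl⟩ := w.exists_fac_of_trW hP hX hY φ.hs φ.f
  have hLA : IsZero (L.obj A) := le_kernel_of_isLocalization_trW P L A hA
  have hLf : L.map φ.f = 0 := by
    rw [← hxl, L.map_comp, hLA.eq_zero_of_tgt (L.map x), zero_comp]
  have := Localization.inverts L P.trW φ.s φ.hs
  rw [← cancel_mono (L.map φ.s), zero_comp, φ.map_comp_map_s, hLf]

variable [HasZeroObject D] [HasShift D ℤ] [∀ n : ℤ, (shiftFunctor D n).Additive]
  [Pretriangulated D] [L.CommShift ℤ] [L.IsTriangulated]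

/-- The weight structure induced on the Verdier quotient `D` of `C` by `P`: its two classes consist
of the retracts of the images of `C_{w≤0}` and of `C_{w≥0}`. -/
def localization (hP : P ≤ w.decomposableIn P) : WeightStructure D where
  LE := ((w.le 0).map L).retractClosure
  GE := ((w.ge 0).map L).retractClosure
  retract_LE _ _ hY i r hir := prop_of_retract ((w.le 0).map L).retractClosure ⟨i, r, hir⟩ hY
  retract_GE _ _ hY i r hir := prop_of_retract ((w.ge 0).map L).retractClosure ⟨i, r, hir⟩ hY
  shift_LE := retractClosure_map_le_shift L <| by
    rw [w.le_shift (m := 1) (by lia)]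
    exact w.le_monotone zero_le_one
  shift_GE := retractClosure_map_le_shift L <| by
    rw [w.ge_shift (m := -1) (by lia)]
    exact w.ge_antitone (by lia)
  orthogonality X hX Y hY f := by
    have horth : (w.le 0).map L ≤ ((w.ge 1).map L).leftOrthogonal :=
      map_le_leftOrthogonal_map fun _ _ ↦ w.map_hom_eq_zero L hP
    have hY' : ((w.ge 1).map L).retractClosure (Y⟦(1 : ℤ)⟧) :=
      retractClosure_map_le_shift L (w.ge_shift (zero_add 1)).ge Y hY
    exact retractClosure_le_leftOrthogonal_retractClosure horth X hX f hY'
  decomposition M := by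
    have := Localization.essSurj L P.trW
    have hM : (extensionProduct (w.le 0) (w.ge 1)).map L M :=
      ⟨L.objPreimage M, (w.extensionProduct_le_ge (zero_add 1)).ge _ trivial,
        ⟨L.objObjPreimageIso M⟩⟩
    obtain ⟨X, Y, f, g, δ, hT, hX, hY⟩ := map_extensionProduct_le L _ _ M hM
    exact ⟨X, Y, f, g, δ, hT, le_retractClosure _ X hX,
      retractClosure_map_le_shift L (w.ge_shift (by lia)).ge Y (le_retractClosure _ Y hY)⟩

end WeightStructure

end Localization

theorem statement17_general {C : Type u} [Category.{v} C] [HasZeroObject C] [HasShift C ℤ]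
    [Preadditive C] [∀ n : ℤ, (shiftFunctor C n).Additive] [Pretriangulated C] [IsTriangulated C]
    {D : Type u'} [Category.{v'} D] [HasZeroObject D] [HasShift D ℤ] [Preadditive D]
    [∀ n : ℤ, (shiftFunctor D n).Additive] [Pretriangulated D] (w : WeightStructure C)
    (P : ObjectProperty C) [P.IsTriangulated] (hP : P ≤ w.decomposableIn P)
    (L : C ⥤ D) [L.CommShift ℤ] [L.IsTriangulated] [L.IsLocalization P.trW] :
    ∃ w' : WeightStructure D,
      w'.LE = {X | ∃ Y ∈ w.LE, ∃ (i : X ⟶ L.obj Y) (r : L.obj Y ⟶ X), i ≫ r = 𝟙 X} ∧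
      w'.GE = {X | ∃ Y ∈ w.GE, ∃ (i : X ⟶ L.obj Y) (r : L.obj Y ⟶ X), i ≫ r = 𝟙 X} ∧
      (∀ X ∈ w.LE, L.obj X ∈ w'.LE) ∧
      (∀ X ∈ w.GE, L.obj X ∈ w'.GE) := by
  refine ⟨w.localization L hP, ?_, ?_, fun X hX ↦ ?_, fun X hX ↦ ?_⟩
  · exact (retractClosure_map_eq L (w.le 0)).trans (by rw [w.le_zero]; rfl)
  · exact (retractClosure_map_eq L (w.ge 0)).trans (by rw [w.ge_zero]; rfl)
  · exact le_retractClosure _ _ (prop_map_obj _ L (w.le_zero.ge X hX))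
  · exact le_retractClosure _ _ (prop_map_obj _ L (w.ge_zero.ge X hX))

/-- Theorem: the retract-closures (in the Verdier quotient `C/𝔻`) of `C_{w≤0}` and of
`C_{w≥0}` form a weight structure on `C/𝔻`, and the localization functor is
weight-exact. Here `𝔻` is generated by a set of objects `B ⊆ C_{[0,1]}`. -/
theorem statement17 {C : Type u} [Category.{v} C] [HasZeroObject C] [HasShift C ℤ]
    [Preadditive C] [∀ n : ℤ, (shiftFunctor C n).Additive] [Pretriangulated C]
    [IsTriangulated C] (w : WeightStructure C) (B : Set C) (hB : B ⊆ w.zeroOne) :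
    ∃ w' : WeightStructure ((genSubcat B).trW.Localization),
      w'.LE = {X | ∃ Y ∈ w.LE, ∃ (i : X ⟶ (genSubcat B).trW.Q.obj Y)
          (r : (genSubcat B).trW.Q.obj Y ⟶ X), i ≫ r = 𝟙 X} ∧
      w'.GE = {X | ∃ Y ∈ w.GE, ∃ (i : X ⟶ (genSubcat B).trW.Q.obj Y)
          (r : (genSubcat B).trW.Q.obj Y ⟶ X), i ≫ r = 𝟙 X} ∧
      (∀ X ∈ w.LE, (genSubcat B).trW.Q.obj X ∈ w'.LE) ∧
      (∀ X ∈ w.GE, (genSubcat B).trW.Q.obj X ∈ w'.GE) := by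
  exact statement17_general w (genSubcat B)
    (w.genSubcat_le_decomposableIn fun X hX ↦ w.le_or_ge_of_mem_zeroOne (hB hX))
    (genSubcat B).trW.Q
end
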